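/- Assume (A1), (A2) and (A3). Let x ∈ D_I. If liminf_{n→∞} (log k(n))/n > I(x), then with probability 1, lim_{ε→0⁺} liminf_{n→∞} (1/n) log μ_n^ω(B(x,ε)) = lim_{ε→0⁺} limsup_{n→∞} (1/n) log μ_n^ω(B(x,ε)) = −I(x), where B(x,ε) is the closed ball of center x and radius ε. (Theorem 3(1), first part.) -/

import Mathlib

open MeasureTheory ProbabilityTheory Filter Set Real
open scoped ENNReal NNReal Classical Topology

/-!
Upper bound: by stationarity `μ_n^ω(A)` has mean at most `μ_n(A)`, so Markov's inequality and
Borel–Cantelli show that almost surely it has no larger exponential growth rate.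

Lower bound: up to a small error, `μ_n^ω(B(x,ε))` is the proportion of the `k(n)` blocks of length
`n` for which a certain event occurs. These block events have a common probability `p`, and those
of two blocks `m` apart have covariance at most `min(p, α_m) ≤ p^(1-θ) α_m^θ`, up to a bounded shift
of `m`. Since (A2) makes `α` decay faster than any power, this is summable over `m` for every
`θ > 0`, so the number of occurrences has variance at most `C k(n) p^(1-θ)`. Chebyshev's inequality
then bounds the probability that it is less than `k(n) p / 2` by `4 C / (k(n) p^(1+θ))`, which for
small `θ` decays exponentially because `k(n)` grows exponentially faster than `1 / p`; conclude by
Borel–Cantelli.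
-/

section ExponentialGrowth

open ExpGrowth

lemma ereal_exp_mul_natCast (a : ℝ) (n : ℕ) :
    EReal.exp (a * n) = ENNReal.ofReal (Real.exp (a * n)) := by
  rw [← EReal.exp_coe]
  norm_cast

lemma tsum_ne_top_of_expGrowthSup_neg {u : ℕ → ℝ≥0∞} (hu : ∀ n, u n ≠ ∞)
    (hneg : expGrowthSup u < 0) : ∑' n, u n ≠ ∞ := by
  obtain ⟨a, hua, ha⟩ := EReal.lt_iff_exists_real_btwn.1 hneg
  obtain ⟨N, hN⟩ := eventually_atTop.1 (eventually_le_exp hua)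
  have hgeom : ∑' n, EReal.exp a ^ n ≠ ∞ := by
    rw [ENNReal.tsum_geometric]
    exact ENNReal.inv_ne_top.2 (tsub_pos_of_lt (EReal.exp_lt_one_iff.2 ha)).ne'
  rw [← ENNReal.summable.sum_add_tsum_nat_add' (k := N)]
  refine ENNReal.add_ne_top.2 ⟨ENNReal.sum_ne_top.2 fun n _ => hu n, ?_⟩
  refine ne_top_of_le_ne_top hgeom (le_trans (ENNReal.tsum_le_tsum fun n => ?_)
    (ENNReal.tsum_comp_le_tsum_of_injective (add_left_injective N) fun n => EReal.exp a ^ n))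
  refine (hN (n + N) (Nat.le_add_left N n)).trans_eq ?_
  rw [mul_comm, EReal.exp_nmul]

lemma ae_eventually_notMem_of_expGrowthSup_neg {Ω : Type*} [MeasurableSpace Ω] {P : Measure Ω}
    [IsFiniteMeasure P] {s : ℕ → Set Ω} (hneg : expGrowthSup (fun n => P (s n)) < 0) :
    ∀ᵐ ω ∂P, ∀ᶠ n in atTop, ω ∉ s n :=
  ae_eventually_notMem (tsum_ne_top_of_expGrowthSup_neg (fun n => measure_ne_top P (s n)) hneg)

lemma ae_expGrowthSup_le_of_lintegral_lt {Ω : Type*} [MeasurableSpace Ω] {P : Measure Ω}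
    [IsFiniteMeasure P] {f : ℕ → Ω → ℝ≥0∞} (hf : ∀ n, AEMeasurable (f n) P) {a : ℝ}
    (ha : expGrowthSup (fun n => ∫⁻ ω, f n ω ∂P) < a) :
    ∀ᵐ ω ∂P, expGrowthSup (fun n => f n ω) ≤ a := by
  obtain ⟨b, hfb, hba⟩ := EReal.lt_iff_exists_real_btwn.1 ha
  have hmarkov : ∀ᶠ n : ℕ in atTop,
      P {ω | EReal.exp (a * n) ≤ f n ω} ≤ EReal.exp (((b - a : ℝ) : EReal) * n) := by
    filter_upwards [eventually_le_exp hfb] with n hn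
    have hsplit : EReal.exp (((b - a : ℝ) : EReal) * n)
        = EReal.exp (b * n) / EReal.exp (a * n) := by
      simp only [ereal_exp_mul_natCast]
      rw [← ENNReal.ofReal_div_of_pos (Real.exp_pos _), ← Real.exp_sub, sub_mul]
    rw [hsplit]
    refine (meas_ge_le_lintegral_div (hf n) ?_ ?_).trans (by gcongr) <;>
      simp [ereal_exp_mul_natCast, Real.exp_pos]
  have hneg : expGrowthSup (fun n : ℕ => P {ω | EReal.exp (a * n) ≤ f n ω}) < 0 :=
    (Eventually.expGrowthSup_le hmarkov).trans_lt <|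
      EReal.coe_neg'.2 (sub_neg.2 (EReal.coe_lt_coe_iff.1 hba))
  filter_upwards [ae_eventually_notMem_of_expGrowthSup_neg hneg] with ω hω
  exact Eventually.expGrowthSup_le (hω.mono fun n hn => (not_le.1 hn).le)

lemma ae_expGrowthSup_le_expGrowthSup_lintegral {Ω : Type*} [MeasurableSpace Ω] {P : Measure Ω}
    [IsFiniteMeasure P] {f : ℕ → Ω → ℝ≥0∞} (hf : ∀ n, AEMeasurable (f n) P) :
    ∀ᵐ ω ∂P, expGrowthSup (fun n => f n ω) ≤ expGrowthSup (fun n => ∫⁻ ω, f n ω ∂P) := by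
  have hrat : ∀ᵐ ω ∂P, ∀ q : ℚ, expGrowthSup (fun n => ∫⁻ ω, f n ω ∂P) < ((q : ℝ) : EReal) →
      expGrowthSup (fun n => f n ω) ≤ ((q : ℝ) : EReal) :=
    ae_all_iff.2 fun q => eventually_imp_distrib_left.2 (ae_expGrowthSup_le_of_lintegral_lt hf)
  filter_upwards [hrat] with ω hω
  refine le_of_forall_gt_imp_ge_of_dense fun a ha => ?_
  obtain ⟨q, hq, hqa⟩ := EReal.lt_iff_exists_rat_btwn.1 ha
  exact (hω q hq).trans hqa.le

end ExponentialGrowth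

section SecondMoment

lemma sum_range_natCast_sub_le_tsum {g : ℤ → ℝ} (hg : Summable g) (hg0 : ∀ z, 0 ≤ g z) (i k : ℕ) :
    ∑ j ∈ Finset.range k, g (j - i) ≤ ∑' z, g z := by
  have hinj : Function.Injective fun j : ℕ => (j - i : ℤ) := fun a b h => by simpa using h
  rw [← Finset.sum_image (f := g) (g := fun j : ℕ => (j - i : ℤ)) hinj.injOn]
  exact hg.sum_le_tsum _ fun z _ => hg0 z

variable {Ω : Type*} [MeasurableSpace Ω] {P : Measure Ω}

lemma variance_sum_range_le [IsFiniteMeasure P] {Y : ℕ → Ω → ℝ} (hY : ∀ i, MemLp (Y i) 2 P)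
    {g : ℤ → ℝ} (hg : Summable g) (hg0 : ∀ z, 0 ≤ g z)
    (hcov : ∀ i j : ℕ, cov[Y i, Y j; P] ≤ g (j - i)) (k : ℕ) :
    Var[fun ω => ∑ i ∈ Finset.range k, Y i ω; P] ≤ k * ∑' z, g z := by
  rw [variance_fun_sum' fun i _ => hY i]
  calc ∑ i ∈ Finset.range k, ∑ j ∈ Finset.range k, cov[Y i, Y j; P]
      ≤ ∑ _i ∈ Finset.range k, ∑' z, g z := by
        refine Finset.sum_le_sum fun i _ => ?_
        exact (Finset.sum_le_sum fun j _ => hcov i j).trans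
          (sum_range_natCast_sub_le_tsum hg hg0 i k)
    _ = k * ∑' z, g z := by simp

lemma measure_le_half_integral_le [IsFiniteMeasure P] {Y : Ω → ℝ} (hY : MemLp Y 2 P)
    (hpos : 0 < P[Y]) :
    P {ω | Y ω ≤ P[Y] / 2} ≤ ENNReal.ofReal (4 * Var[Y; P] / P[Y] ^ 2) := by
  calc P {ω | Y ω ≤ P[Y] / 2}
      ≤ P {ω | P[Y] / 2 ≤ |Y ω - P[Y]|} := by
        refine measure_mono fun ω (hω : Y ω ≤ P[Y] / 2) => ?_
        rw [mem_ofPred_eq, abs_sub_comm]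
        exact le_trans (by linarith) (le_abs_self _)
    _ ≤ ENNReal.ofReal (Var[Y; P] / (P[Y] / 2) ^ 2) := meas_ge_le_variance_div_sq hY (half_pos hpos)
    _ = ENNReal.ofReal (4 * Var[Y; P] / P[Y] ^ 2) := by
        congr 1
        field_simp
        norm_num

variable [IsProbabilityMeasure P]

lemma covariance_indicator_one {A B : Set Ω} (hA : MeasurableSet A) (hB : MeasurableSet B) :
    cov[A.indicator 1, B.indicator 1; P] = P.real (A ∩ B) - P.real A * P.real B := by
  have hmul : (A.indicator 1 * B.indicator 1 : Ω → ℝ) = (A ∩ B).indicator 1 := by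
    rw [inter_indicator_one]
  have hmemLp : ∀ {D : Set Ω}, MeasurableSet D → MemLp (D.indicator (1 : Ω → ℝ)) 2 P :=
    fun hD => (memLp_const (1 : ℝ)).indicator hD
  rw [covariance_eq_sub (hmemLp hA) (hmemLp hB), hmul, integral_indicator_one hA,
    integral_indicator_one hB, integral_indicator_one (hA.inter hB)]

lemma min_le_rpow_mul_rpow {a b θ : ℝ} (ha : 0 ≤ a) (hb : 0 ≤ b) (hθ0 : 0 ≤ θ) (hθ1 : θ ≤ 1) :
    min a b ≤ a ^ (1 - θ) * b ^ θ := by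
  have hmin : 0 ≤ min a b := le_min ha hb
  calc min a b = min a b ^ (1 - θ) * min a b ^ θ := by
        rw [← Real.rpow_add' hmin (by norm_num), sub_add_cancel, Real.rpow_one]
    _ ≤ a ^ (1 - θ) * b ^ θ :=
        mul_le_mul (rpow_le_rpow hmin (min_le_left a b) (sub_nonneg.2 hθ1))
          (rpow_le_rpow hmin (min_le_right a b) hθ0) (rpow_nonneg hmin θ) (rpow_nonneg ha _)

lemma covariance_indicator_one_le_rpow_mul_rpow {A B : Set Ω} (hA : MeasurableSet A)
    (hB : MeasurableSet B) {b θ : ℝ} (hb : 0 ≤ b)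
    (hcov : P.real (A ∩ B) - P.real A * P.real B ≤ b) (hθ0 : 0 ≤ θ) (hθ1 : θ ≤ 1) :
    cov[A.indicator 1, B.indicator 1; P] ≤ P.real A ^ (1 - θ) * b ^ θ := by
  rw [covariance_indicator_one hA hB]
  refine (le_min ?_ hcov).trans (min_le_rpow_mul_rpow measureReal_nonneg hb hθ0 hθ1)
  have hinter : P.real (A ∩ B) ≤ P.real A := measureReal_mono inter_subset_left
  have hprod : 0 ≤ P.real A * P.real B := by positivity
  linarith

lemma measure_sum_indicator_le_half_le {A : ℕ → Set Ω} (hA : ∀ i, MeasurableSet (A i)) {p : ℝ}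
    (hp : 0 < p) (hAp : ∀ i, P.real (A i) = p) {β : ℤ → ℝ} (hβ0 : ∀ z, 0 ≤ β z)
    (hcov : ∀ i j : ℕ, P.real (A i ∩ A j) - P.real (A i) * P.real (A j) ≤ β (j - i))
    {θ : ℝ} (hθ0 : 0 ≤ θ) (hθ1 : θ ≤ 1) (hsum : Summable fun z => β z ^ θ) {k : ℕ} (hk : 0 < k) :
    P {ω | ∑ i ∈ Finset.range k, (A i).indicator 1 ω ≤ k * p / 2}
      ≤ ENNReal.ofReal (4 * (∑' z, β z ^ θ) / (k * p ^ (1 + θ))) := by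
  have hmemLp : ∀ i, MemLp ((A i).indicator (1 : Ω → ℝ)) 2 P :=
    fun i => (memLp_const (1 : ℝ)).indicator (hA i)
  have hmean : P[fun ω => ∑ i ∈ Finset.range k, (A i).indicator (1 : Ω → ℝ) ω] = k * p := by
    rw [integral_finsetSum _ fun i _ => (hmemLp i).integrable one_le_two]
    simp [integral_indicator_one (hA _), hAp]
  have hvar : Var[fun ω => ∑ i ∈ Finset.range k, (A i).indicator (1 : Ω → ℝ) ω; P]
      ≤ k * (p ^ (1 - θ) * ∑' z, β z ^ θ) := by
    rw [← tsum_mul_left]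
    refine variance_sum_range_le hmemLp (hsum.mul_left _) (fun z => ?_) (fun i j => ?_) k
    · exact mul_nonneg (rpow_nonneg hp.le _) (rpow_nonneg (hβ0 z) _)
    · rw [← hAp i]
      exact covariance_indicator_one_le_rpow_mul_rpow (hA i) (hA j) (hβ0 _) (hcov i j) hθ0 hθ1
  have hcheb := measure_le_half_integral_le (memLp_finsetSum _ fun i _ => hmemLp i)
    (by rw [hmean]; positivity)
  rw [hmean] at hcheb
  refine hcheb.trans (ENNReal.ofReal_le_ofReal ?_)
  calc 4 * Var[fun ω => ∑ i ∈ Finset.range k, (A i).indicator (1 : Ω → ℝ) ω; P] / (k * p) ^ 2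
      ≤ 4 * (k * (p ^ (1 - θ) * ∑' z, β z ^ θ)) / (k * p) ^ 2 := by gcongr
    _ = 4 * (∑' z, β z ^ θ) / (k * p ^ (1 + θ)) := by
        have hsq : p ^ (1 - θ) * p ^ (1 + θ) = p ^ 2 := by
          rw [← Real.rpow_add hp, ← Real.rpow_natCast]
          norm_num
        rw [div_eq_div_iff (by positivity) (by positivity), mul_pow, ← hsq]
        ring

lemma summable_int_natAbs_sub_rpow {α : ℕ → ℝ}
    (hα : Asymptotics.SuperpolynomialDecay atTop (fun m : ℕ => (m : ℝ)) α) (c : ℕ)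
    {θ : ℝ} (hθ : 0 < θ) : Summable fun z : ℤ => α (z.natAbs - c) ^ θ := by
  have hnat : Summable fun m : ℕ => α m ^ θ := by
    obtain ⟨q, hq⟩ := exists_nat_gt (1 / θ)
    have hbound : α =O[atTop] fun m : ℕ => (m : ℝ) ^ (-q : ℤ) :=
      (Asymptotics.superpolynomialDecay_iff_isBigO α tendsto_natCast_atTop_atTop).1 hα (-q)
    refine summable_of_isBigO_nat
      (Real.summable_nat_rpow.2 (neg_lt_neg ((div_lt_iff₀ hθ).1 hq))) ?_
    refine (hbound.rpow hθ.le (.of_forall fun m => by positivity)).congr_right fun m => ?_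
    rw [← Real.rpow_intCast, ← Real.rpow_mul m.cast_nonneg]
    push_cast
    rw [neg_mul]
  have hshift : Summable fun m : ℕ => α (m - c) ^ θ :=
    (summable_nat_add_iff c).1 (by simpa using hnat)
  exact .of_nat_of_neg (by simpa using hshift) (by simpa using hshift)

end SecondMoment

section ExponentialSamples

open ExpGrowth

variable {Ω : Type*} [MeasurableSpace Ω] {P : Measure Ω} [IsProbabilityMeasure P]

lemma exists_mem_Ioo_one_add_mul_lt {b κ : ℝ} (h : b < κ) :
    ∃ θ ∈ Ioo (0 : ℝ) 1, (1 + θ) * b < κ := by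
  have hlim : Tendsto (fun θ : ℝ => (1 + θ) * b) (𝓝[>] 0) (𝓝 b) := by
    have hcont : Continuous fun θ : ℝ => (1 + θ) * b := by fun_prop
    simpa using hcont.continuousWithinAt.tendsto (x := 0) (s := Ioi 0)
  exact ((eventually_mem_set.2 (Ioo_mem_nhdsGT one_pos)).and (hlim.eventually_lt_const h)).exists

lemma expGrowthSup_second_moment_bound_neg {p k : ℕ → ℝ} {b κ θ : ℝ} (hθ : 0 ≤ θ)
    (hbκ : (1 + θ) * b < κ) (hp : ∀ᶠ n : ℕ in atTop, Real.exp (-b * n) ≤ p n)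
    (hk : ∀ᶠ n : ℕ in atTop, Real.exp (κ * n) ≤ k n) (C : ℝ) :
    expGrowthSup (fun n => ENNReal.ofReal (C / (k n * p n ^ (1 + θ)))) < 0 := by
  have hbound : ∀ᶠ n : ℕ in atTop, ENNReal.ofReal (C / (k n * p n ^ (1 + θ)))
      ≤ ENNReal.ofReal |C| * EReal.exp (((1 + θ) * b - κ : ℝ) * n) := by
    filter_upwards [hp, hk] with n hpn hkn
    rw [ereal_exp_mul_natCast, ← ENNReal.ofReal_mul (abs_nonneg C)]
    refine ENNReal.ofReal_le_ofReal ?_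
    calc C / (k n * p n ^ (1 + θ))
        ≤ |C| / (Real.exp (κ * n) * Real.exp (-b * n) ^ (1 + θ)) := by
          have hkn0 : 0 ≤ k n := (Real.exp_pos _).le.trans hkn
          gcongr
          exact le_abs_self C
      _ = |C| * Real.exp (((1 + θ) * b - κ) * n) := by
          rw [← Real.exp_mul, ← Real.exp_add, div_eq_mul_inv, ← Real.exp_neg]
          ring_nf
  calc expGrowthSup (fun n => ENNReal.ofReal (C / (k n * p n ^ (1 + θ))))
      ≤ expGrowthSup fun n : ℕ => EReal.exp (((1 + θ) * b - κ : ℝ) * n) :=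
        expGrowthSup_le_of_eventually_le ENNReal.ofReal_ne_top hbound
    _ = ((1 + θ) * b - κ : ℝ) := expGrowthSup_exp
    _ < 0 := by exact_mod_cast sub_neg.2 hbκ

lemma eventually_real_exp_le_toReal {u : ℕ → ℝ≥0∞} (hu : ∀ n, u n ≠ ∞) {a : ℝ}
    (ha : a < expGrowthInf u) : ∀ᶠ n : ℕ in atTop, Real.exp (a * n) ≤ (u n).toReal := by
  filter_upwards [eventually_exp_le ha] with n hn
  rw [ereal_exp_mul_natCast] at hn
  exact (ENNReal.ofReal_le_iff_le_toReal (hu n)).1 hn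

lemma ae_eventually_half_lt_sum_indicator {A : ℕ → ℕ → Set Ω} (hA : ∀ n i, MeasurableSet (A n i))
    {p : ℕ → ℝ≥0∞} (hAp : ∀ n i, P (A n i) = p n) {β : ℤ → ℝ} (hβ0 : ∀ z, 0 ≤ β z)
    (hsum : ∀ θ : ℝ, 0 < θ → Summable fun z => β z ^ θ)
    (hcov : ∀ᶠ n in atTop, ∀ i j : ℕ,
      P.real (A n i ∩ A n j) - P.real (A n i) * P.real (A n j) ≤ β (j - i))
    {k : ℕ → ℕ} {r : ℝ} (hp : -(r : EReal) ≤ expGrowthInf p)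
    (hk : (r : EReal) < expGrowthInf fun n => (k n : ℝ≥0∞)) :
    ∀ᵐ ω ∂P, ∀ᶠ n in atTop,
      k n * (p n).toReal / 2 < ∑ i ∈ Finset.range (k n), (A n i).indicator (1 : Ω → ℝ) ω := by
  obtain ⟨κ, hrκ, hκ⟩ := EReal.lt_iff_exists_real_btwn.1 hk
  obtain ⟨b, hrb, hbκ⟩ := exists_between (EReal.coe_lt_coe_iff.1 hrκ)
  obtain ⟨θ, ⟨hθ0, hθ1⟩, hθ⟩ := exists_mem_Ioo_one_add_mul_lt hbκ
  have hpexp : ∀ᶠ n : ℕ in atTop, Real.exp (-b * n) ≤ (p n).toReal := by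
    refine eventually_real_exp_le_toReal (fun n => hAp n 0 ▸ measure_ne_top P _) (hp.trans_lt' ?_)
    exact_mod_cast neg_lt_neg hrb
  have hkexp : ∀ᶠ n : ℕ in atTop, Real.exp (κ * n) ≤ (k n : ℝ) :=
    eventually_real_exp_le_toReal (fun n => ENNReal.natCast_ne_top (k n)) hκ
  have hmoment : ∀ᶠ n in atTop,
      P {ω | ∑ i ∈ Finset.range (k n), (A n i).indicator (1 : Ω → ℝ) ω ≤ k n * (p n).toReal / 2}
        ≤ ENNReal.ofReal (4 * (∑' z, β z ^ θ) / (k n * (p n).toReal ^ (1 + θ))) := by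
    filter_upwards [hcov, hpexp, hkexp] with n hn hpn hkn
    exact measure_sum_indicator_le_half_le (hA n) ((Real.exp_pos _).trans_le hpn)
      (fun i => congrArg ENNReal.toReal (hAp n i)) hβ0 hn hθ0.le hθ1.le (hsum θ hθ0)
      (Nat.cast_pos.1 ((Real.exp_pos _).trans_le hkn))
  filter_upwards [ae_eventually_notMem_of_expGrowthSup_neg <|
    (expGrowthSup_eventually_monotone hmoment).trans_lt
      (expGrowthSup_second_moment_bound_neg hθ0.le hθ hpexp hkexp _)] with ω hω
  exact hω.mono fun n hn => not_le.1 hn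

end ExponentialSamples

section AlphaCoeff

/-- The `α`-mixing coefficient `sup {|P(U) P(V) - P(U ∩ V)| : U ∈ 𝓤, V ∈ 𝓥}` of two
sub-`σ`-algebras. -/
noncomputable def alphaCoeff {Ω : Type*} (𝓤 𝓥 : MeasurableSpace Ω) {_ : MeasurableSpace Ω}
    (P : Measure Ω) : ℝ :=
  sSup {r : ℝ | ∃ A B : Set Ω, MeasurableSet[𝓤] A ∧ MeasurableSet[𝓥] B ∧
    r = |(P A).toReal * (P B).toReal - (P (A ∩ B)).toReal|}

variable {Ω : Type*} {𝓤 𝓥 𝓥' : MeasurableSpace Ω} [mΩ : MeasurableSpace Ω] {P : Measure Ω}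

lemma alphaCoeff_nonneg : 0 ≤ alphaCoeff 𝓤 𝓥 P := by
  refine Real.sSup_nonneg ?_
  rintro _ ⟨A, B, -, -, rfl⟩
  exact abs_nonneg _

variable [IsProbabilityMeasure P]

lemma abs_measureReal_mul_sub_inter_le (A : Set Ω) {B : Set Ω} (hB : MeasurableSet B) :
    |P.real A * P.real B - P.real (A ∩ B)| ≤ 1 / 2 := by
  have hinterA : P.real (A ∩ B) ≤ P.real A := measureReal_mono inter_subset_left
  have hinterB : P.real (A ∩ B) ≤ P.real B := measureReal_mono inter_subset_right
  have hunion : P.real (A ∪ B) + P.real (A ∩ B) = P.real A + P.real B :=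
    measureReal_union_add_inter hB
  have hunion1 : P.real (A ∪ B) ≤ 1 := measureReal_le_one
  have hA1 : P.real A ≤ 1 := measureReal_le_one
  have hB1 : P.real B ≤ 1 := measureReal_le_one
  have hinter0 : 0 ≤ P.real (A ∩ B) := measureReal_nonneg
  exact abs_le.2 ⟨by nlinarith [hA1, hB1], by nlinarith [hA1, hB1]⟩

lemma alphaCoeff_le_half (h𝓥 : 𝓥 ≤ mΩ) : alphaCoeff 𝓤 𝓥 P ≤ 1 / 2 := by
  refine Real.sSup_le ?_ (by norm_num)
  rintro _ ⟨A, B, -, hB, rfl⟩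
  exact abs_measureReal_mul_sub_inter_le A (h𝓥 B hB)

lemma abs_measureReal_mul_sub_inter_le_alphaCoeff (h𝓥 : 𝓥 ≤ mΩ) {A B : Set Ω}
    (hA : MeasurableSet[𝓤] A) (hB : MeasurableSet[𝓥] B) :
    |P.real A * P.real B - P.real (A ∩ B)| ≤ alphaCoeff 𝓤 𝓥 P := by
  refine le_csSup ⟨1 / 2, ?_⟩ ⟨A, B, hA, hB, rfl⟩
  rintro _ ⟨A, B, -, hB, rfl⟩
  exact abs_measureReal_mul_sub_inter_le A (h𝓥 B hB)

lemma alphaCoeff_mono_right (h𝓥𝓥' : 𝓥 ≤ 𝓥') (h𝓥' : 𝓥' ≤ mΩ) :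
    alphaCoeff 𝓤 𝓥 P ≤ alphaCoeff 𝓤 𝓥' P := by
  refine Real.sSup_le ?_ alphaCoeff_nonneg
  rintro _ ⟨A, B, hA, hB, rfl⟩
  exact abs_measureReal_mul_sub_inter_le_alphaCoeff h𝓥' hA (h𝓥𝓥' B hB)

end AlphaCoeff

section RosenblattCoeff

/-- The `σ`-algebra generated by the coordinates `X_k`, `k ∈ s`, of the process `X`. -/
abbrev coordMeasurableSpace {Ω E : Type*} [MeasurableSpace E] (X : Ω → ℕ → E) (s : Set ℕ) :
    MeasurableSpace Ω :=
  ⨆ k ∈ s, MeasurableSpace.comap (fun ω => X ω k) inferInstance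

/-- The Rosenblatt mixing coefficients `α_{X,m}` of the process `X`, with the convention
`α_{X,0} = 1/2`. -/
noncomputable def rosenblattCoeff {Ω E : Type*} [MeasurableSpace Ω] [MeasurableSpace E]
    (X : Ω → ℕ → E) (P : Measure Ω) (m : ℕ) : ℝ :=
  if m = 0 then 1 / 2
  else ⨆ i, alphaCoeff (coordMeasurableSpace X (Iic i)) (coordMeasurableSpace X (Ici (i + m))) P

variable {Ω E : Type*} [MeasurableSpace E] {X : Ω → ℕ → E}

lemma coordMeasurableSpace_mono {s t : Set ℕ} (hst : s ⊆ t) :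
    coordMeasurableSpace X s ≤ coordMeasurableSpace X t :=
  biSup_mono hst

variable [MeasurableSpace Ω]

lemma coordMeasurableSpace_le (hX : Measurable X) (s : Set ℕ) :
    coordMeasurableSpace X s ≤ ‹MeasurableSpace Ω› :=
  iSup₂_le fun k _ => ((measurable_pi_apply k).comp hX).comap_le

variable {P : Measure Ω}

lemma rosenblattCoeff_of_ne_zero {m : ℕ} (hm : m ≠ 0) : rosenblattCoeff X P m =
    ⨆ i, alphaCoeff (coordMeasurableSpace X (Iic i)) (coordMeasurableSpace X (Ici (i + m))) P :=
  if_neg hm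

lemma rosenblattCoeff_nonneg (m : ℕ) : 0 ≤ rosenblattCoeff X P m := by
  rcases eq_or_ne m 0 with rfl | hm
  · norm_num [rosenblattCoeff]
  · rw [rosenblattCoeff_of_ne_zero hm]
    exact Real.iSup_nonneg fun i => alphaCoeff_nonneg

variable [IsProbabilityMeasure P]

lemma rosenblattCoeff_le_half (hX : Measurable X) (m : ℕ) : rosenblattCoeff X P m ≤ 1 / 2 := by
  rcases eq_or_ne m 0 with rfl | hm
  · norm_num [rosenblattCoeff]
  · rw [rosenblattCoeff_of_ne_zero hm]
    exact Real.iSup_le (fun i => alphaCoeff_le_half (coordMeasurableSpace_le hX _)) (by norm_num)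

lemma alphaCoeff_le_rosenblattCoeff (hX : Measurable X) (i : ℕ) {m : ℕ} (hm : m ≠ 0) :
    alphaCoeff (coordMeasurableSpace X (Iic i)) (coordMeasurableSpace X (Ici (i + m))) P
      ≤ rosenblattCoeff X P m := by
  rw [rosenblattCoeff_of_ne_zero hm]
  exact le_ciSup (f := fun i => alphaCoeff (coordMeasurableSpace X (Iic i))
      (coordMeasurableSpace X (Ici (i + m))) P)
    ⟨1 / 2, forall_mem_range.2 fun j => alphaCoeff_le_half (coordMeasurableSpace_le hX _)⟩ i

lemma antitone_rosenblattCoeff (hX : Measurable X) : Antitone (rosenblattCoeff X P) := by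
  intro m m' hmm'
  rcases eq_or_ne m 0 with rfl | hm
  · simpa [rosenblattCoeff] using rosenblattCoeff_le_half hX m'
  · rw [rosenblattCoeff_of_ne_zero (hm.bot_lt.trans_le hmm').ne']
    refine Real.iSup_le (fun i => ?_) (rosenblattCoeff_nonneg m)
    exact (alphaCoeff_mono_right
      (coordMeasurableSpace_mono (Ici_subset_Ici.2 (by lia)))
      (coordMeasurableSpace_le hX _)).trans (alphaCoeff_le_rosenblattCoeff hX i hm)

/-- For `j ≤ i` the lag `j - i` truncates to `0`, where the coefficient is the universal bound
`1 / 2`. -/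
lemma measureReal_inter_sub_mul_le_rosenblattCoeff (hX : Measurable X) {i j : ℕ} {A B : Set Ω}
    (hA : MeasurableSet[coordMeasurableSpace X (Iic i)] A)
    (hB : MeasurableSet[coordMeasurableSpace X (Ici j)] B) :
    P.real (A ∩ B) - P.real A * P.real B ≤ rosenblattCoeff X P (j - i) := by
  have habs : P.real (A ∩ B) - P.real A * P.real B ≤ |P.real A * P.real B - P.real (A ∩ B)| := by
    rw [abs_sub_comm]
    exact le_abs_self _
  refine habs.trans ?_
  rcases le_or_gt j i with hji | hij
  · rw [Nat.sub_eq_zero_of_le hji]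
    simpa [rosenblattCoeff] using
      abs_measureReal_mul_sub_inter_le A (coordMeasurableSpace_le hX _ B hB)
  · obtain ⟨m, rfl⟩ := Nat.exists_eq_add_of_le hij.le
    rw [Nat.add_sub_cancel_left]
    exact (abs_measureReal_mul_sub_inter_le_alphaCoeff (coordMeasurableSpace_le hX _) hA hB).trans
      (alphaCoeff_le_rosenblattCoeff hX i (by lia))

end RosenblattCoeff

section MixingInverse

/-- The generalized inverse `α⁻¹(u) = inf {m : α_m ≤ u}` of a sequence of mixing coefficients,
infinite when the sequence stays above `u`. -/
noncomputable def mixingInverse (α : ℕ → ℝ) (u : ℝ) : ℝ≥0∞ :=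
  sInf ((fun m : ℕ => (m : ℝ≥0∞)) '' {m | α m ≤ u})

variable {α : ℕ → ℝ}

lemma natCast_le_mixingInverse (hα : Antitone α) {m : ℕ} {u : ℝ} (hu : u < α m) :
    (m : ℝ≥0∞) ≤ mixingInverse α u := by
  refine le_sInf ?_
  rintro _ ⟨m', hm' : α m' ≤ u, rfl⟩
  exact Nat.cast_le.2 (le_of_not_ge fun hle => absurd (hα hle) (hm'.trans_lt hu).not_ge)

lemma ofReal_pow_mul_le_lintegral_mixingInverse (hα : Antitone α) {m : ℕ} (hα1 : α m ≤ 1) (q : ℕ) :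
    ENNReal.ofReal ((m : ℝ) ^ q * α m)
      ≤ ∫⁻ u in Ioc (0 : ℝ) 1, mixingInverse α u ^ (q : ℝ) := by
  calc ENNReal.ofReal ((m : ℝ) ^ q * α m)
      = ∫⁻ _ in Ioo (0 : ℝ) (α m), (m : ℝ≥0∞) ^ (q : ℝ) := by
        rw [setLIntegral_const, Real.volume_Ioo, sub_zero, ENNReal.ofReal_mul (by positivity),
          ENNReal.ofReal_pow m.cast_nonneg, ENNReal.ofReal_natCast, ENNReal.rpow_natCast]
    _ ≤ ∫⁻ u in Ioo (0 : ℝ) (α m), mixingInverse α u ^ (q : ℝ) := by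
        refine setLIntegral_mono' measurableSet_Ioo fun u hu => ?_
        gcongr
        exact natCast_le_mixingInverse hα hu.2
    _ ≤ ∫⁻ u in Ioc (0 : ℝ) 1, mixingInverse α u ^ (q : ℝ) :=
        lintegral_mono_set (Ioo_subset_Ioc_self.trans (Ioc_subset_Ioc_right hα1))

lemma superpolynomialDecay_of_lintegral_mixingInverse_lt_top (hα : Antitone α)
    (hα0 : ∀ m, 0 ≤ α m) (hα1 : ∀ m, α m ≤ 1)
    (hint : ∀ h : ℝ, 0 < h → ∫⁻ u in Ioc (0 : ℝ) 1, mixingInverse α u ^ h < ⊤) :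
    Asymptotics.SuperpolynomialDecay atTop (fun m : ℕ => (m : ℝ)) α := by
  refine (Asymptotics.superpolynomialDecay_iff_abs_isBoundedUnder α
    tendsto_natCast_atTop_atTop).2 fun q => ?_
  refine isBoundedUnder_of_eventually_le (a := (∫⁻ u in Ioc (0 : ℝ) 1,
    mixingInverse α u ^ ((q + 1 : ℕ) : ℝ)).toReal) ?_
  filter_upwards [eventually_ge_atTop 1] with m hm
  have hm1 : (1 : ℝ) ≤ m := Nat.one_le_cast.2 hm
  calc |(m : ℝ) ^ q * α m| = (m : ℝ) ^ q * α m :=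
        abs_of_nonneg (mul_nonneg (by positivity) (hα0 m))
    _ ≤ (m : ℝ) ^ (q + 1) * α m := by
        gcongr
        exacts [hα0 m, q.le_succ]
    _ ≤ _ := (ENNReal.ofReal_le_iff_le_toReal (hint _ (by positivity)).ne).1
        (ofReal_pow_mul_le_lintegral_mixingInverse hα (hα1 m) (q + 1))

lemma superpolynomialDecay_rosenblattCoeff {Ω E : Type*} [MeasurableSpace Ω] [MeasurableSpace E]
    {X : Ω → ℕ → E} {P : Measure Ω} [IsProbabilityMeasure P] (hX : Measurable X)
    (hint : ∀ h : ℝ, 0 < h →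
      ∫⁻ u in Ioc (0 : ℝ) 1, mixingInverse (rosenblattCoeff X P) u ^ h < ⊤) :
    Asymptotics.SuperpolynomialDecay atTop (fun m : ℕ => (m : ℝ)) (rosenblattCoeff X P) :=
  superpolynomialDecay_of_lintegral_mixingInverse_lt_top (antitone_rosenblattCoeff hX)
    rosenblattCoeff_nonneg (fun m => (rosenblattCoeff_le_half hX m).trans (by norm_num)) hint

end MixingInverse

section EmpiricalMeasure

/-- The `j`-th iterate `T^j` of the shift on sequences. -/
def shift {E : Type*} (j : ℕ) (z : ℕ → E) : ℕ → E := fun i => z (i + j)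

/-- The empirical measure `k⁻¹ ∑_{j < k} δ_{T^{jn} X(ω)}` of the process over `k` consecutive blocks
of length `n`; the measure `μ_n^ω` is its image under `S_nΦ / n`. -/
noncomputable def empiricalMeasure {Ω E : Type*} [MeasurableSpace E] (X : Ω → ℕ → E) (n k : ℕ)
    (ω : Ω) : Measure (ℕ → E) :=
  (k : ℝ≥0∞)⁻¹ • ∑ j ∈ Finset.range k, Measure.dirac (shift (j * n) (X ω))

/-- The event that the process lies in `S` when read from the start of its `j`-th block of
length `n`. -/
def blockEvent {Ω E : Type*} (X : Ω → ℕ → E) (n : ℕ) (S : Set (ℕ → E)) (j : ℕ) : Set Ω :=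
  {ω | shift (j * n) (X ω) ∈ S}

variable {Ω E : Type*} [MeasurableSpace E]

lemma measurable_shift (j : ℕ) : Measurable (shift (E := E) j) :=
  measurable_pi_lambda _ fun i => measurable_pi_apply (i + j)

lemma empiricalMeasure_apply (X : Ω → ℕ → E) (n k : ℕ) (ω : Ω) {S : Set (ℕ → E)}
    (hS : MeasurableSet S) : empiricalMeasure X n k ω S =
      (k : ℝ≥0∞)⁻¹ * ∑ j ∈ Finset.range k, (blockEvent X n S j).indicator 1 ω := by
  simp only [empiricalMeasure, Measure.smul_apply, Measure.finsetSum_apply,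
    Measure.dirac_apply' _ hS, smul_eq_mul]
  rfl

lemma map_empiricalMeasure {𝒴 : Type*} [MeasurableSpace 𝒴] {F : (ℕ → E) → 𝒴} (hF : Measurable F)
    (X : Ω → ℕ → E) (n k : ℕ) (ω : Ω) : (empiricalMeasure X n k ω).map F =
      (k : ℝ≥0∞)⁻¹ • ∑ j ∈ Finset.Icc 1 k, Measure.dirac (F fun i => X ω (i + (j - 1) * n)) := by
  rw [empiricalMeasure, Measure.map_smul, Measure.map_finset_sum hF.aemeasurable,
    ← Finset.Ico_add_one_right_eq_Icc, Finset.sum_Ico_eq_sum_range]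
  simp only [Measure.map_dirac' hF, add_tsub_cancel_left, add_tsub_cancel_right]
  rfl

variable [MeasurableSpace Ω] {P : Measure Ω} {X : Ω → ℕ → E}

lemma measurable_shift_comp (hX : Measurable X) (j : ℕ) : Measurable fun ω => shift j (X ω) :=
  (measurable_shift j).comp hX

lemma map_shift_eq_map (hX : Measurable X)
    (hstat : P.map (fun ω i => X ω (i + 1)) = P.map X) (j : ℕ) :
    P.map (fun ω => shift j (X ω)) = P.map X := by
  induction j with
  | zero => rfl
  | succ j ih =>
    calc P.map (fun ω => shift (j + 1) (X ω))
        = (P.map fun ω => shift j (X ω)).map (shift 1) := by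
          rw [Measure.map_map (measurable_shift 1) (measurable_shift_comp hX j)]
          congr 1 with ω i
          simp [shift, add_assoc, add_comm 1 j]
      _ = P.map X := by
          rw [ih, Measure.map_map (measurable_shift 1) hX, ← hstat]
          rfl

lemma measurableSet_blockEvent (hX : Measurable X) (n : ℕ) {S : Set (ℕ → E)} (hS : MeasurableSet S)
    (j : ℕ) : MeasurableSet (blockEvent X n S j) :=
  (measurable_shift_comp hX _) hS

lemma measure_blockEvent (hX : Measurable X)
    (hstat : P.map (fun ω i => X ω (i + 1)) = P.map X) (n : ℕ) {S : Set (ℕ → E)}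
    (hS : MeasurableSet S) (j : ℕ) : P (blockEvent X n S j) = P.map X S := by
  rw [← map_shift_eq_map hX hstat (j * n), Measure.map_apply (measurable_shift_comp hX _) hS]
  rfl

lemma measurable_empiricalMeasure_apply (hX : Measurable X) (n k : ℕ) {S : Set (ℕ → E)}
    (hS : MeasurableSet S) : Measurable fun ω => empiricalMeasure X n k ω S := by
  simp only [empiricalMeasure_apply X n k _ hS]
  refine (Finset.measurable_fun_sum _ fun j _ => ?_).const_mul _
  exact measurable_one.indicator (measurableSet_blockEvent hX n hS j)

lemma lintegral_empiricalMeasure_le (hX : Measurable X)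
    (hstat : P.map (fun ω i => X ω (i + 1)) = P.map X) (n k : ℕ) {S : Set (ℕ → E)}
    (hS : MeasurableSet S) : ∫⁻ ω, empiricalMeasure X n k ω S ∂P ≤ P.map X S := by
  have hmeas : ∀ j, Measurable ((blockEvent X n S j).indicator (1 : Ω → ℝ≥0∞)) :=
    fun j => measurable_one.indicator (measurableSet_blockEvent hX n hS j)
  simp only [empiricalMeasure_apply X n k _ hS]
  rw [lintegral_const_mul _ (Finset.measurable_fun_sum _ fun j _ => hmeas j),
    lintegral_finsetSum _ fun j _ => hmeas j]
  simp only [lintegral_indicator_one (measurableSet_blockEvent hX n hS _),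
    measure_blockEvent hX hstat n hS, Finset.sum_const, Finset.card_range, nsmul_eq_mul]
  rw [← mul_assoc]
  exact mul_le_of_le_one_left' (ENNReal.inv_mul_le_one _)

end EmpiricalMeasure

section FinitelyManyCoordinates

variable {Ω ι E : Type*} {s : Set ι}

lemma dependsOn_piecewise_const (s : Set ι) (z₀ : ι → E) :
    DependsOn (fun z => s.piecewise z z₀) s := fun z z' h => by
  ext i
  by_cases hi : i ∈ s
  · simpa only [piecewise_eq_of_mem _ _ _ hi] using h i hi
  · simp only [piecewise_eq_of_notMem _ _ _ hi]

lemma dist_piecewise_const_le {𝒴 : Type*} [PseudoMetricSpace 𝒴] {F G : (ι → E) → 𝒴}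
    (hG : DependsOn G s) {η : ℝ} (hFG : ∀ z, dist (F z) (G z) ≤ η) (z z₀ : ι → E) :
    dist (F z) (F (s.piecewise z z₀)) ≤ 2 * η := by
  have hGz : G z = G (s.piecewise z z₀) :=
    hG fun i hi => (piecewise_eq_of_mem s z z₀ hi).symm
  calc dist (F z) (F (s.piecewise z z₀))
      ≤ dist (F z) (G z) + dist (G z) (F (s.piecewise z z₀)) := dist_triangle _ _ _
    _ ≤ η + η := by
        refine add_le_add (hFG z) ?_
        rw [hGz, dist_comm]
        exact hFG _
    _ = 2 * η := (two_mul η).symm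

lemma preimage_closedBall_subset_of_dist_le {Z 𝒴 : Type*} [PseudoMetricSpace 𝒴] {f g : Z → 𝒴}
    {η ε ε' : ℝ} (hfg : ∀ z, dist (f z) (g z) ≤ η) (hε : ε + η ≤ ε') (x : 𝒴) :
    f ⁻¹' Metric.closedBall x ε ⊆ g ⁻¹' Metric.closedBall x ε' := by
  intro z (hz : dist (f z) x ≤ ε)
  calc dist (g z) x ≤ dist (f z) (g z) + dist (f z) x := dist_triangle_left _ _ _
    _ ≤ ε' := by linarith [hfg z]

variable [MeasurableSpace E]

lemma measurable_piecewise_const [MeasurableSpace Ω] {Y : Ω → ι → E}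
    (hY : ∀ i ∈ s, Measurable fun ω => Y ω i) (z₀ : ι → E) :
    Measurable fun ω => s.piecewise (Y ω) z₀ := by
  refine measurable_pi_lambda _ fun i => ?_
  by_cases hi : i ∈ s
  · simpa only [piecewise_eq_of_mem _ _ _ hi] using hY i hi
  · simpa only [piecewise_eq_of_notMem _ _ _ hi] using measurable_const

lemma measurableSet_setOf_mem_of_dependsOn [mΩ : MeasurableSpace Ω] {Y : Ω → ι → E}
    (hY : ∀ i ∈ s, Measurable fun ω => Y ω i) {S : Set (ι → E)} (hS : MeasurableSet S)
    (hdep : DependsOn (fun z => z ∈ S) s) : MeasurableSet {ω | Y ω ∈ S} := by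
  rcases isEmpty_or_nonempty Ω with hΩ | ⟨⟨ω₀⟩⟩
  · exact Subsingleton.measurableSet
  · have hiff : ∀ ω, Y ω ∈ S ↔ s.piecewise (Y ω) (Y ω₀) ∈ S := fun ω =>
      (hdep fun i hi => (piecewise_eq_of_mem s (Y ω) (Y ω₀) hi).symm).to_iff
    simp only [hiff]
    exact measurable_piecewise_const hY (Y ω₀) hS

lemma exists_measurable_dependsOn_dist_le [Nonempty (ι → E)] {𝒴 : Type*} [PseudoMetricSpace 𝒴]
    [MeasurableSpace 𝒴] {F G : ℕ → (ι → E) → 𝒴} {s : ℕ → Set ι} (hF : ∀ n, Measurable (F n))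
    (hG : ∀ n, DependsOn (G n) (s n))
    (hFG : ∀ η > 0, ∀ᶠ n in atTop, ∀ z, dist (F n z) (G n z) ≤ η) :
    ∃ H : ℕ → (ι → E) → 𝒴, (∀ n, Measurable (H n)) ∧ (∀ n, DependsOn (H n) (s n)) ∧
      ∀ η > 0, ∀ᶠ n in atTop, ∀ z, dist (F n z) (H n z) ≤ η := by
  obtain ⟨z₀⟩ := ‹Nonempty (ι → E)›
  -- Freezing coordinates in `F n` keeps measurability, which `G n` may lack.
  refine ⟨fun n z => F n ((s n).piecewise z z₀), fun n => ?_, fun n => ?_, fun η hη => ?_⟩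
  · exact (hF n).comp (measurable_piecewise_const (fun i _ => measurable_pi_apply i) z₀)
  · exact fun z z' h => congrArg (F n) (dependsOn_piecewise_const (s n) z₀ h)
  · filter_upwards [hFG (η / 2) (half_pos hη)] with n hn z
    linarith [dist_piecewise_const_le (hG n) hn z z₀]

end FinitelyManyCoordinates

section Blocks

variable {Ω E : Type*} [MeasurableSpace E] {X : Ω → ℕ → E}

lemma measurable_coordMeasurableSpace {s : Set ℕ} {i : ℕ} (hi : i ∈ s) :
    Measurable[coordMeasurableSpace X s] fun ω => X ω i :=
  measurable_iff_comap_le.2 (le_iSup₂_of_le i hi le_rfl)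

lemma measurableSet_coord_blockEvent {S : Set (ℕ → E)} (hS : MeasurableSet S) {l : ℕ}
    (hdep : DependsOn (fun z => z ∈ S) (Iio l)) {n j : ℕ} {s : Set ℕ}
    (hs : Ico (j * n) (j * n + l) ⊆ s) :
    MeasurableSet[coordMeasurableSpace X s] (blockEvent X n S j) :=
  measurableSet_setOf_mem_of_dependsOn (mΩ := coordMeasurableSpace X s)
    (fun i (hi : i < l) =>
      measurable_coordMeasurableSpace (hs ⟨Nat.le_add_left _ i, by lia⟩)) hS hdep

variable [MeasurableSpace Ω] {P : Measure Ω} [IsProbabilityMeasure P]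

lemma measureReal_inter_blockEvent_sub_mul_le (hX : Measurable X) {S : Set (ℕ → E)}
    (hS : MeasurableSet S) {c n : ℕ} (hn : 0 < n) (hdep : DependsOn (fun z => z ∈ S) (Iio (c * n)))
    (i j : ℕ) :
    P.real (blockEvent X n S i ∩ blockEvent X n S j)
        - P.real (blockEvent X n S i) * P.real (blockEvent X n S j)
      ≤ rosenblattCoeff X P ((j - i : ℤ).natAbs - c) := by
  wlog hij : i ≤ j generalizing i j
  · have hsymm := this j i (le_of_not_ge hij)
    rwa [inter_comm, mul_comm (P.real _), ← Int.natAbs_neg, neg_sub] at hsymm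
  have hgap : (j - i : ℤ).natAbs - c ≤ j * n - (i + c) * n := by
    rw [← Nat.sub_mul, show (j - i : ℤ).natAbs - c = j - (i + c) by lia]
    exact Nat.le_mul_of_pos_right _ hn
  refine le_trans ?_ (antitone_rosenblattCoeff hX hgap)
  refine measureReal_inter_sub_mul_le_rosenblattCoeff hX
    (measurableSet_coord_blockEvent hS hdep ?_)
    (measurableSet_coord_blockEvent hS hdep fun l hl => hl.1)
  rw [add_mul]
  exact fun l hl => hl.2.le

end Blocks

section EmpiricalLowerBound

open ExpGrowth

lemma ofReal_sum_indicator_one {Ω ι : Type*} (A : ι → Set Ω) (s : Finset ι) (ω : Ω) :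
    ENNReal.ofReal (∑ j ∈ s, (A j).indicator (1 : Ω → ℝ) ω) =
      ∑ j ∈ s, (A j).indicator (1 : Ω → ℝ≥0∞) ω := by
  rw [ENNReal.ofReal_sum_of_nonneg fun j _ => indicator_nonneg (by simp) ω]
  refine Finset.sum_congr rfl fun j _ => ?_
  by_cases hj : ω ∈ A j <;> simp [hj]

variable {Ω E : Type*} [MeasurableSpace Ω] [MeasurableSpace E] {P : Measure Ω}
  [IsProbabilityMeasure P] {X : Ω → ℕ → E} {k : ℕ → ℕ} {r : ℝ}

lemma ae_eventually_half_le_empiricalMeasure (hX : Measurable X)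
    (hstat : P.map (fun ω i => X ω (i + 1)) = P.map X)
    (hmix : Asymptotics.SuperpolynomialDecay atTop (fun m : ℕ => (m : ℝ)) (rosenblattCoeff X P))
    {S : ℕ → Set (ℕ → E)} (hS : ∀ n, MeasurableSet (S n)) {c : ℕ}
    (hdep : ∀ n, DependsOn (fun z => z ∈ S n) (Iio (c * n)))
    (hrate : -(r : EReal) ≤ expGrowthInf fun n => P.map X (S n))
    (hk : (r : EReal) < expGrowthInf fun n => (k n : ℝ≥0∞)) :
    ∀ᵐ ω ∂P, ∀ᶠ n in atTop, 2⁻¹ * P.map X (S n) ≤ empiricalMeasure X n (k n) ω (S n) := by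
  have hcov : ∀ᶠ n in atTop, ∀ i j : ℕ,
      P.real (blockEvent X n (S n) i ∩ blockEvent X n (S n) j)
          - P.real (blockEvent X n (S n) i) * P.real (blockEvent X n (S n) j)
        ≤ rosenblattCoeff X P ((j - i : ℤ).natAbs - c) :=
    (eventually_gt_atTop 0).mono fun n hn =>
      measureReal_inter_blockEvent_sub_mul_le hX (hS n) hn (hdep n)
  filter_upwards [ae_eventually_half_lt_sum_indicator
    (fun n => measurableSet_blockEvent hX n (hS n)) (fun n => measure_blockEvent hX hstat n (hS n))
    (β := fun z => rosenblattCoeff X P (z.natAbs - c)) (fun z => rosenblattCoeff_nonneg _)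
    (fun θ => summable_int_natAbs_sub_rpow hmix c) hcov hrate hk] with ω hω
  filter_upwards [hω] with n hn
  have hkn : k n ≠ 0 := by
    intro hkn
    simp [hkn] at hn
  have hfin : P.map X (S n) ≠ ∞ := measure_ne_top _ _
  rw [empiricalMeasure_apply X n (k n) ω (hS n), ← ofReal_sum_indicator_one]
  calc 2⁻¹ * P.map X (S n)
      = (k n : ℝ≥0∞)⁻¹ * ENNReal.ofReal (k n * (P.map X (S n)).toReal / 2) := by
        rw [ENNReal.ofReal_div_of_pos two_pos, ENNReal.ofReal_mul (Nat.cast_nonneg _),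
          ENNReal.ofReal_natCast, ENNReal.ofReal_toReal hfin, ENNReal.ofReal_ofNat, mul_div_assoc,
          ENNReal.inv_mul_cancel_left (by simpa) (by simp), mul_comm, div_eq_mul_inv]
    _ ≤ _ := by gcongr

lemma ae_le_expGrowthInf_empiricalMeasure (hX : Measurable X)
    (hstat : P.map (fun ω i => X ω (i + 1)) = P.map X)
    (hmix : Asymptotics.SuperpolynomialDecay atTop (fun m : ℕ => (m : ℝ)) (rosenblattCoeff X P))
    {S : ℕ → Set (ℕ → E)} (hS : ∀ n, MeasurableSet (S n)) {c : ℕ}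
    (hdep : ∀ n, DependsOn (fun z => z ∈ S n) (Iio (c * n)))
    (hrate : -(r : EReal) ≤ expGrowthInf fun n => P.map X (S n))
    (hk : (r : EReal) < expGrowthInf fun n => (k n : ℝ≥0∞)) :
    ∀ᵐ ω ∂P, -(r : EReal) ≤ expGrowthInf fun n => empiricalMeasure X n (k n) ω (S n) := by
  filter_upwards [ae_eventually_half_le_empiricalMeasure hX hstat hmix hS hdep hrate hk] with ω hω
  exact hrate.trans (expGrowthInf_of_eventually_ge (by simp) hω)

lemma ae_le_expGrowthInf_map_empiricalMeasure_closedBall {𝒴 : Type*} [PseudoMetricSpace 𝒴]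
    [MeasurableSpace 𝒴] [OpensMeasurableSpace 𝒴] (hX : Measurable X)
    (hstat : P.map (fun ω i => X ω (i + 1)) = P.map X)
    (hmix : Asymptotics.SuperpolynomialDecay atTop (fun m : ℕ => (m : ℝ)) (rosenblattCoeff X P))
    {F G : ℕ → (ℕ → E) → 𝒴} (hF : ∀ n, Measurable (F n)) (hGm : ∀ n, Measurable (G n)) {c : ℕ}
    (hG : ∀ n, DependsOn (G n) (Iio (c * n)))
    (hFG : ∀ η > 0, ∀ᶠ n in atTop, ∀ z, dist (F n z) (G n z) ≤ η) {x : 𝒴}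
    (hrate : ∀ ε > 0,
      -(r : EReal) ≤ expGrowthInf fun n => (P.map X).map (F n) (Metric.closedBall x ε))
    (hk : (r : EReal) < expGrowthInf fun n => (k n : ℝ≥0∞)) {ε : ℝ} (hε : 0 < ε) :
    ∀ᵐ ω ∂P, -(r : EReal) ≤
      expGrowthInf fun n => (empiricalMeasure X n (k n) ω).map (F n) (Metric.closedBall x ε) := by
  have hrateG : -(r : EReal) ≤
      expGrowthInf fun n => P.map X (G n ⁻¹' Metric.closedBall x (2 * (ε / 3))) := by
    refine (hrate (ε / 3) (by positivity)).trans (expGrowthInf_eventually_monotone ?_)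
    filter_upwards [hFG (ε / 3) (by positivity)] with n hn
    rw [Measure.map_apply (hF n) measurableSet_closedBall]
    exact measure_mono (preimage_closedBall_subset_of_dist_le hn (two_mul _).ge x)
  have hdep : ∀ n,
      DependsOn (fun z => z ∈ G n ⁻¹' Metric.closedBall x (2 * (ε / 3))) (Iio (c * n)) :=
    fun n z z' h => congrArg (· ∈ Metric.closedBall x (2 * (ε / 3))) (hG n h)
  filter_upwards [ae_le_expGrowthInf_empiricalMeasure hX hstat hmix
    (fun n => hGm n measurableSet_closedBall) hdep hrateG hk] with ω hω
  refine hω.trans (expGrowthInf_eventually_monotone ?_)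
  filter_upwards [hFG (ε / 3) (by positivity)] with n hn
  rw [Measure.map_apply (hF n) measurableSet_closedBall]
  refine measure_mono (preimage_closedBall_subset_of_dist_le (η := ε / 3) (fun z => ?_) ?_ x)
  · simpa only [dist_comm] using hn z
  · linarith

end EmpiricalLowerBound

section LocalRate

open ExpGrowth

variable {𝒴 : Type*} [PseudoMetricSpace 𝒴] [MeasurableSpace 𝒴] {ν : ℕ → Measure 𝒴} {x : 𝒴}

/-- The sequence `ν` decays locally at `x` at the exponential rate `r`: the lower and upper
exponential growth rates of `ν_n(B(x,ε))`, with closed balls `B(x,ε)`, both tend to `-r` as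
`ε → 0⁺`. -/
def HasLocalRate (ν : ℕ → Measure 𝒴) (x : 𝒴) (r : EReal) : Prop :=
  Tendsto (fun ε : ℝ => expGrowthInf fun n => ν n (Metric.closedBall x ε)) (𝓝[>] 0) (𝓝 (-r)) ∧
    Tendsto (fun ε : ℝ => expGrowthSup fun n => ν n (Metric.closedBall x ε)) (𝓝[>] 0) (𝓝 (-r))

lemma monotone_expGrowthInf_closedBall :
    Monotone fun ε : ℝ => expGrowthInf fun n => ν n (Metric.closedBall x ε) := fun _ _ h =>
  expGrowthInf_monotone fun _ => measure_mono (Metric.closedBall_subset_closedBall h)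

lemma monotone_expGrowthSup_closedBall :
    Monotone fun ε : ℝ => expGrowthSup fun n => ν n (Metric.closedBall x ε) := fun _ _ h =>
  expGrowthSup_monotone fun _ => measure_mono (Metric.closedBall_subset_closedBall h)

variable {r : EReal}

lemma HasLocalRate.neg_le_expGrowthInf (h : HasLocalRate ν x r) {ε : ℝ} (hε : 0 < ε) :
    -r ≤ expGrowthInf fun n => ν n (Metric.closedBall x ε) :=
  le_of_tendsto h.1 <| (eventually_mem_set.2 (Ioo_mem_nhdsGT hε)).mono fun _ hε' =>
    monotone_expGrowthInf_closedBall hε'.2.le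

lemma HasLocalRate.exists_expGrowthSup_lt (h : HasLocalRate ν x r) {a : EReal} (ha : -r < a) :
    ∃ l : ℕ, (expGrowthSup fun n => ν n (Metric.closedBall x (1 / (l + 1)))) < a := by
  have hlim : Tendsto (fun l : ℕ => 1 / ((l : ℝ) + 1)) atTop (𝓝[>] 0) :=
    tendsto_nhdsWithin_iff.2 ⟨tendsto_one_div_add_atTop_nhds_zero_nat,
      .of_forall fun _ => mem_Ioi.2 Nat.one_div_pos_of_nat⟩
  exact ((h.2.comp hlim).eventually_lt_const ha).exists

lemma hasLocalRate_of_forall_nat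
    (hinf : ∀ l : ℕ, -r ≤ expGrowthInf fun n => ν n (Metric.closedBall x (1 / (l + 1))))
    (hsup : ∀ a, -r < a → ∃ l : ℕ,
      (expGrowthSup fun n => ν n (Metric.closedBall x (1 / (l + 1)))) < a) :
    HasLocalRate ν x r := by
  have hlower : ∀ ε : ℝ, 0 < ε → -r ≤ expGrowthInf fun n => ν n (Metric.closedBall x ε) := by
    intro ε hε
    obtain ⟨l, hl⟩ := exists_nat_one_div_lt hε
    exact (hinf l).trans (monotone_expGrowthInf_closedBall hl.le)
  have hupper : ∀ a, -r < a →
      ∀ᶠ ε : ℝ in 𝓝[>] 0, (expGrowthSup fun n => ν n (Metric.closedBall x ε)) < a := by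
    intro a ha
    obtain ⟨l, hl⟩ := hsup a ha
    filter_upwards [Ioo_mem_nhdsGT (Nat.one_div_pos_of_nat (n := l) (α := ℝ))] with ε hε
    exact (monotone_expGrowthSup_closedBall hε.2.le).trans_lt hl
  refine ⟨tendsto_order.2 ⟨fun a ha => ?_, fun a ha => ?_⟩,
    tendsto_order.2 ⟨fun a ha => ?_, hupper⟩⟩
  · filter_upwards [self_mem_nhdsWithin] with ε hε using ha.trans_le (hlower ε hε)
  · filter_upwards [hupper a ha] with ε hε using expGrowthInf_le_expGrowthSup.trans_lt hε
  · filter_upwards [self_mem_nhdsWithin] with ε hε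
    exact ha.trans_le ((hlower ε hε).trans expGrowthInf_le_expGrowthSup)

/-- The large deviation principle for `ν` with rate function `I`, at speed `n`. -/
def SatisfiesLDP (ν : ℕ → Measure 𝒴) (I : 𝒴 → ℝ≥0∞) : Prop :=
  LowerSemicontinuous I ∧ ∀ Γ, MeasurableSet Γ →
    -(⨅ y ∈ interior Γ, (I y : EReal)) ≤ expGrowthInf (fun n => ν n Γ) ∧
      expGrowthSup (fun n => ν n Γ) ≤ -(⨅ y ∈ closure Γ, (I y : EReal))

lemma SatisfiesLDP.hasLocalRate [OpensMeasurableSpace 𝒴] {I : 𝒴 → ℝ≥0∞} (h : SatisfiesLDP ν I)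
    (x : 𝒴) : HasLocalRate ν x (I x) := by
  refine hasLocalRate_of_forall_nat (fun l => ?_) fun a ha => ?_
  · have hx : x ∈ interior (Metric.closedBall x (1 / ((l : ℝ) + 1))) :=
      mem_interior_iff_mem_nhds.2 (Metric.closedBall_mem_nhds x Nat.one_div_pos_of_nat)
    exact (EReal.neg_le_neg_iff.2 (iInf₂_le x hx)).trans (h.2 _ measurableSet_closedBall).1
  · obtain ⟨b, hab, hb⟩ := exists_between (EReal.neg_lt_comm.1 ha)
    have hlsc : LowerSemicontinuous fun y => (I y : EReal) :=
      continuous_coe_ennreal_ereal.comp_lowerSemicontinuous h.1 fun _ _ =>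
        EReal.coe_ennreal_le_coe_ennreal_iff.2
    obtain ⟨ε, hε, hball⟩ := Metric.nhds_basis_closedBall.eventually_iff.1 (hlsc x b hb)
    obtain ⟨l, hl⟩ := exists_nat_one_div_lt hε
    refine ⟨l, (h.2 _ measurableSet_closedBall).2.trans_lt ?_⟩
    rw [Metric.isClosed_closedBall.closure_eq]
    refine (EReal.neg_le_neg_iff.2 (le_iInf₂ fun y hy => ?_)).trans_lt (EReal.neg_lt_comm.1 hab)
    exact (hball (Metric.closedBall_subset_closedBall hl.le hy)).le

end LocalRate

section LocalRateOfEmpiricalMeasure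

open ExpGrowth

variable {Ω E 𝒴 : Type*} [MeasurableSpace Ω] [MeasurableSpace E] [MeasurableSpace 𝒴]
  {P : Measure Ω} {X : Ω → ℕ → E} {F : ℕ → (ℕ → E) → 𝒴}

lemma ae_expGrowthSup_map_empiricalMeasure_le [IsFiniteMeasure P] (hX : Measurable X)
    (hstat : P.map (fun ω i => X ω (i + 1)) = P.map X) (hF : ∀ n, Measurable (F n)) (k : ℕ → ℕ)
    {A : Set 𝒴} (hA : MeasurableSet A) :
    ∀ᵐ ω ∂P, (expGrowthSup fun n => (empiricalMeasure X n (k n) ω).map (F n) A) ≤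
      expGrowthSup fun n => (P.map X).map (F n) A := by
  filter_upwards [ae_expGrowthSup_le_expGrowthSup_lintegral fun n =>
    (measurable_empiricalMeasure_apply hX n (k n) (hF n hA)).aemeasurable] with ω hω
  simp only [Measure.map_apply (hF _) hA]
  exact hω.trans <| expGrowthSup_monotone fun n =>
    lintegral_empiricalMeasure_le hX hstat n (k n) (hF n hA)

theorem theorem3_part1_first_general [IsProbabilityMeasure P] [PseudoMetricSpace 𝒴]
    [OpensMeasurableSpace 𝒴] (hX : Measurable X)
    (hstat : P.map (fun ω i => X ω (i + 1)) = P.map X)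
    (hmix : Asymptotics.SuperpolynomialDecay atTop (fun m : ℕ => (m : ℝ)) (rosenblattCoeff X P))
    (hF : ∀ n, Measurable (F n)) {G : ℕ → (ℕ → E) → 𝒴} {c : ℕ}
    (hG : ∀ n, DependsOn (G n) (Iio (c * n)))
    (hFG : ∀ η > 0, ∀ᶠ n in atTop, ∀ z, dist (F n z) (G n z) ≤ η) {x : 𝒴} {r : ℝ}
    (hrate : HasLocalRate (fun n => (P.map X).map (F n)) x r) {k : ℕ → ℕ}
    (hk : (r : EReal) < expGrowthInf fun n => (k n : ℝ≥0∞)) :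
    ∀ᵐ ω ∂P, HasLocalRate (fun n => (empiricalMeasure X n (k n) ω).map (F n)) x r := by
  obtain ⟨ω₀⟩ := nonempty_of_isProbabilityMeasure P
  have : Nonempty (ℕ → E) := ⟨X ω₀⟩
  obtain ⟨H, hHm, hH, hFH⟩ := exists_measurable_dependsOn_dist_le hF hG hFG
  have hlower := ae_all_iff.2 fun l : ℕ =>
    ae_le_expGrowthInf_map_empiricalMeasure_closedBall hX hstat hmix hF hHm hH hFH
      (fun _ => hrate.neg_le_expGrowthInf) hk (Nat.one_div_pos_of_nat (n := l))
  have hupper := ae_all_iff.2 fun l : ℕ => ae_expGrowthSup_map_empiricalMeasure_le hX hstat hF k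
    (Metric.isClosed_closedBall (x := x) (ε := 1 / ((l : ℝ) + 1))).measurableSet
  filter_upwards [hlower, hupper] with ω hωlower hωupper
  refine hasLocalRate_of_forall_nat hωlower fun a ha => ?_
  obtain ⟨l, hl⟩ := hrate.exists_expGrowthSup_lt ha
  exact ⟨l, (hωupper l).trans_lt hl⟩

end LocalRateOfEmpiricalMeasure

section LiminfForm

open ExpGrowth

lemma expGrowthInf_eq_liminf_inv_mul_log (u : ℕ → ℝ≥0∞) :
    expGrowthInf u = liminf (fun n : ℕ => ((n : ℝ)⁻¹ : EReal) * ENNReal.log (u n)) atTop := by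
  simp only [expGrowthInf_def, LinearGrowth.linearGrowthInf, Function.comp_apply,
    EReal.div_eq_inv_mul, EReal.coe_natCast]

lemma expGrowthSup_eq_limsup_inv_mul_log (u : ℕ → ℝ≥0∞) :
    expGrowthSup u = limsup (fun n : ℕ => ((n : ℝ)⁻¹ : EReal) * ENNReal.log (u n)) atTop := by
  simp only [expGrowthSup_def, LinearGrowth.linearGrowthSup, Function.comp_apply,
    EReal.div_eq_inv_mul, EReal.coe_natCast]

lemma expGrowthInf_natCast_eq_liminf_log_div {k : ℕ → ℕ} (hk : ∀ n, 0 < k n) :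
    expGrowthInf (fun n => (k n : ℝ≥0∞)) =
      liminf (fun n => ((Real.log (k n) / n : ℝ) : EReal)) atTop := by
  have hlog : ∀ n, ENNReal.log (k n) = (Real.log (k n) : EReal) := fun n => by
    rw [ENNReal.log_pos_real (by simp [(hk n).ne']) (by simp), ENNReal.toReal_natCast]
  simp only [expGrowthInf_def, LinearGrowth.linearGrowthInf, Function.comp_apply,
    hlog, EReal.coe_div, EReal.coe_natCast]

end LiminfForm

lemma eventually_dist_inv_smul_le {Z 𝒴 : Type*} [SeminormedAddCommGroup 𝒴] [NormedSpace ℝ 𝒴]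
    {f g : ℕ → Z → 𝒴} {δ : ℕ → ℝ} (hδ : Tendsto δ atTop (𝓝 0))
    (hfg : ∀ n z, ‖f n z - g n z‖ ≤ n * δ n) {η : ℝ} (hη : 0 < η) :
    ∀ᶠ n : ℕ in atTop, ∀ z, dist ((n : ℝ)⁻¹ • f n z) ((n : ℝ)⁻¹ • g n z) ≤ η := by
  filter_upwards [hδ.eventually_le_const hη, eventually_gt_atTop 0] with n hδn hn z
  calc dist ((n : ℝ)⁻¹ • f n z) ((n : ℝ)⁻¹ • g n z)
      = (n : ℝ)⁻¹ * ‖f n z - g n z‖ := by rw [dist_smul₀, dist_eq_norm, norm_inv, norm_natCast]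
    _ ≤ (n : ℝ)⁻¹ * (n * δ n) := by gcongr; exact hfg n z
    _ = δ n := inv_mul_cancel_left₀ (by positivity) _
    _ ≤ η := hδn

/-- **Theorem 3(1), first part.**
Under (A1) (LDP for the laws `μₙ` of `SₙΦ(X)/n` with rate function `I`),
(A2) (mixing) and (A3) (approximation), if `x ∈ D_I` and
`liminf (log k(n))/n > I(x)`, then almost surely
`lim_{ε→0⁺} liminf_n (1/n) log μₙ^ω(B(x,ε)) = lim_{ε→0⁺} limsup_n (1/n) log μₙ^ω(B(x,ε))
  = -I(x)`. -/
theorem theorem3_part1_first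
    {Ω : Type*} [MeasurableSpace Ω] (P : Measure Ω) [IsProbabilityMeasure P]
    {E : Type*} [MeasurableSpace E]
    {𝒴 : Type*} [NormedAddCommGroup 𝒴] [NormedSpace ℝ 𝒴]
    [MeasurableSpace 𝒴] [BorelSpace 𝒴]
    -- the stationary process
    (Xseq : Ω → ℕ → E) (hXmeas : Measurable Xseq)
    (hstat : Measure.map (fun ω => fun i => Xseq ω (i + 1)) P = Measure.map Xseq P)
    -- the functionals SₙΦ
    (SΦ : ℕ → (ℕ → E) → 𝒴) (hSΦmeas : ∀ n, Measurable (SΦ n))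
    -- the laws μₙ of SₙΦ(X)/n
    (μ : ℕ → Measure 𝒴)
    (hμ : ∀ n, μ n = Measure.map (fun ω => (n : ℝ)⁻¹ • SΦ n (Xseq ω)) P)
    -- (A1): LDP with rate function I
    (I : 𝒴 → ℝ≥0∞) (hIlsc : LowerSemicontinuous I)
    (hLDP : ∀ Γ : Set 𝒴,
      -(⨅ x ∈ interior Γ, (I x : EReal)) ≤
          Filter.atTop.liminf (fun n : ℕ => ((n : ℝ)⁻¹ : EReal) * ENNReal.log (μ n Γ)) ∧
        Filter.atTop.limsup (fun n : ℕ => ((n : ℝ)⁻¹ : EReal) * ENNReal.log (μ n Γ)) ≤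
          -(⨅ x ∈ closure Γ, (I x : EReal)))
    -- (A2): mixing
    (alphaX : ℕ → ℝ) (halpha0 : alphaX 0 = 1 / 2)
    (halpha : ∀ m, 1 ≤ m → alphaX m = ⨆ i : ℕ, sSup {r : ℝ | ∃ A B : Set Ω,
      MeasurableSet[⨆ kk ∈ Set.Iic i,
        MeasurableSpace.comap (fun ω => Xseq ω kk) inferInstance] A ∧
      MeasurableSet[⨆ jj ∈ Set.Ici (i + m),
        MeasurableSpace.comap (fun ω => Xseq ω jj) inferInstance] B ∧
      r = |(P A).toReal * (P B).toReal - (P (A ∩ B)).toReal|})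
    (αinv : ℝ → ℝ≥0∞)
    (hαinv : ∀ u, αinv u = sInf ((fun m : ℕ => (m : ℝ≥0∞)) '' {m | alphaX m ≤ u}))
    (hA2 : ∀ h : ℝ, 0 < h → ∫⁻ u in Set.Ioc (0 : ℝ) 1, (αinv u) ^ h ∂volume < ⊤)
    -- (A3): approximation by functions of 2n coordinates
    (SΦapp : ℕ → (ℕ → E) → 𝒴)
    (happdep : ∀ n (z z' : ℕ → E), (∀ i < 2 * n, z i = z' i) → SΦapp n z = SΦapp n z')
    (δ : ℕ → ℝ) (hδ0 : Tendsto δ atTop (nhds 0))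
    (hδ : ∀ n z, ‖SΦ n z - SΦapp n z‖ ≤ (n : ℝ) * δ n)
    -- the empirical measures μₙ^ω
    (k : ℕ → ℕ) (hkpos : ∀ n, 0 < k n)
    (μω : ℕ → Ω → Measure 𝒴)
    (hμω : ∀ n ω, μω n ω = (k n : ℝ≥0∞)⁻¹ •
      ∑ j ∈ Finset.Icc 1 (k n),
        Measure.dirac ((n : ℝ)⁻¹ • SΦ n (fun i => Xseq ω (i + (j - 1) * n))))
    -- the point x ∈ D_I and the growth condition on k(n)
    (x : 𝒴) (hx : I x ≠ ⊤)
    (hliminf : (I x : EReal) <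
      Filter.atTop.liminf (fun n => ((Real.log (k n) / n : ℝ) : EReal))) :
    ∀ᵐ ω ∂P,
      Tendsto (fun ε : ℝ =>
          Filter.atTop.liminf (fun n : ℕ =>
            ((n : ℝ)⁻¹ : EReal) * ENNReal.log (μω n ω (Metric.closedBall x ε))))
        (nhdsWithin 0 (Set.Ioi 0)) (nhds (-(I x : EReal))) ∧
      Tendsto (fun ε : ℝ =>
          Filter.atTop.limsup (fun n : ℕ =>
            ((n : ℝ)⁻¹ : EReal) * ENNReal.log (μω n ω (Metric.closedBall x ε))))
        (nhdsWithin 0 (Set.Ioi 0)) (nhds (-(I x : EReal))) := by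
  have hα : alphaX = rosenblattCoeff Xseq P := by
    ext (_ | m)
    exacts [halpha0, halpha _ m.succ_pos]
  have hαinv' : αinv = mixingInverse (rosenblattCoeff Xseq P) := hα ▸ funext hαinv
  have hmix := superpolynomialDecay_rosenblattCoeff hXmeas (hαinv' ▸ hA2)
  have hFmeas : ∀ n : ℕ, Measurable fun z => (n : ℝ)⁻¹ • SΦ n z := fun n =>
    (hSΦmeas n).const_smul _
  have hμ' : μ = fun n : ℕ => (P.map Xseq).map fun z => (n : ℝ)⁻¹ • SΦ n z := funext fun n =>
    (hμ n).trans (Measure.map_map (hFmeas n) hXmeas).symm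
  have hrate : HasLocalRate μ x (I x) := SatisfiesLDP.hasLocalRate ⟨hIlsc, fun Γ _ => by
    simpa only [expGrowthInf_eq_liminf_inv_mul_log, expGrowthSup_eq_limsup_inv_mul_log]
      using hLDP Γ⟩ x
  rw [← expGrowthInf_natCast_eq_liminf_log_div hkpos] at hliminf
  rw [← EReal.coe_ennreal_toReal hx] at hrate hliminf
  filter_upwards [theorem3_part1_first_general hXmeas hstat hmix hFmeas
    (fun n z z' h => congrArg ((n : ℝ)⁻¹ • ·) (happdep n z z' h))
    (fun _ => eventually_dist_inv_smul_le hδ0 hδ) (hμ' ▸ hrate) hliminf] with ω hω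
  simp only [map_empiricalMeasure (hFmeas _), ← hμω, EReal.coe_ennreal_toReal hx] at hω
  simpa only [HasLocalRate, expGrowthInf_eq_liminf_inv_mul_log, expGrowthSup_eq_limsup_inv_mul_log]
    using hω
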